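/- Let n ≥ 2 and k ≥ 1, and let T be a bipartite labeled tree with n labeled and k unlabeled vertices. For each labeled vertex j, let P(T,j) be the partition of the set of labeled vertices other than j in which i and i' lie in the same block if and only if they are connected by a path in the graph obtained from T by deleting the vertex j. Let H be the subgroup of Aut(F_n) generated by all inner automorphisms together with the Whitehead generators α_{I,j} for all labeled j and all blocks I ∈ P(T,j). Then there exists a surjective group homomorphism from H onto the free abelian group ℤ^{k−1} whose kernel is exactly the subgroup of inner automorphisms; in other words, the image of H in Aut(F_n) modulo inner automorphisms is free abelian of rank k − 1. -/

import Mathlib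

open scoped Classical in
/-- The Whitehead generator `α_{I,j} ∈ Aut(F_n)` for a set `I ⊆ Fin n`: the
automorphism of `FreeGroup (Fin n)` determined on the basis by
`x i ↦ x j⁻¹ * x i * x j` for `i ∈ I` and `x i ↦ x i` for `i ∉ I`. -/
noncomputable def whitehead (n : ℕ) (I : Set (Fin n)) (j : Fin n) :
    MulAut (FreeGroup (Fin n)) :=
  MonoidHom.toMulEquiv
    (FreeGroup.lift (fun i : Fin n =>
      if i ∈ I then (FreeGroup.of j)⁻¹ * FreeGroup.of i * FreeGroup.of j
      else FreeGroup.of i))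
    (FreeGroup.lift (fun i : Fin n =>
      if i ∈ I then FreeGroup.of j * FreeGroup.of i * (FreeGroup.of j)⁻¹
      else FreeGroup.of i))
    (by
      apply FreeGroup.ext_hom
      intro i
      by_cases hi : i ∈ I <;> by_cases hj : j ∈ I <;>
        simp [hi, hj, FreeGroup.lift_apply_of] <;> group)
    (by
      apply FreeGroup.ext_hom
      intro i
      by_cases hi : i ∈ I <;> by_cases hj : j ∈ I <;>
        simp [hi, hj, FreeGroup.lift_apply_of] <;> group)

/-- The graph obtained from `T` by deleting the labeled vertex `j` (and all
incident edges). -/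
def deleteLabeled {n k : ℕ} (T : SimpleGraph (Fin n ⊕ Fin k)) (j : Fin n) :
    SimpleGraph (Fin n ⊕ Fin k) :=
  SimpleGraph.fromRel (fun a b => T.Adj a b ∧ a ≠ Sum.inl j ∧ b ≠ Sum.inl j)

/-- `I` is a block of the partition `P(T,j)` of the labeled vertices other than `j`:
two labels lie in the same block iff they are connected by a path in the graph
obtained from `T` by deleting the vertex labeled `j`. -/
def IsBlock {n k : ℕ} (T : SimpleGraph (Fin n ⊕ Fin k)) (j : Fin n)
    (I : Set (Fin n)) : Prop :=
  ∃ i₀ : Fin n, i₀ ≠ j ∧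
    I = {i : Fin n | i ≠ j ∧ (deleteLabeled T j).Reachable (Sum.inl i) (Sum.inl i₀)}

/-!
Root `T` at an unlabeled vertex `w₀`. Every other unlabeled vertex `w` has a labeled parent `p w`;
let `β w` be the Whitehead generator at `p w` that conjugates the labels in the branch at `w`.

* Branches that avoid the root are disjoint or nested, so the `β w` commute.
* The blocks at `j` are the branches at the children of `j`, each giving some `β w`, and the block
  on the side of the root. The product of the generators over all blocks at `j` is the inner
  automorphism by `x_j⁻¹`, so the root-side generator is redundant modulo inner automorphisms.
* If `φ x_i = c * x_i * c⁻¹` with `i ≠ j`, then the exponent sum of `x_j` in `c` depends only on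
  `φ`, and this defines a character of the pure symmetric automorphisms. On inner automorphisms it
  does not depend on `i`. Hence the difference of two such characters, for `j = p w` and labels `i`
  on the root side and in the branch at `w`, kills the inner automorphisms; its value is `1` on
  `β w` and `0` on the other generators `β v`.

So `H` modulo inner automorphisms is generated by `k - 1` commuting elements with a dual family of
characters.
-/

section FreeGroupAutomorphisms

variable {α : Type*}

-- Send `x_i` to a function supported at `1 ∈ Q` in the base of the wreath product `ℤ ≀ Q`, and the
-- other `x_t` to the top group `Q`: only elements with trivial `Q`-component centralize the former.
theorem map_eq_one_of_commute_of {Q : Type*} [Group Q] (f : FreeGroup α →* Q) {i : α}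
    (hf : f (FreeGroup.of i) = 1) {g : FreeGroup α} (hg : Commute g (FreeGroup.of i)) :
    f g = 1 := by
  classical
  let base : Multiplicative ℤ ≀ᵣ Q := ⟨Pi.mulSingle 1 (Multiplicative.ofAdd 1), 1⟩
  let ρ : FreeGroup α →* Multiplicative ℤ ≀ᵣ Q :=
    FreeGroup.lift fun t => if t = i then base else RegularWreathProduct.inl (f (FreeGroup.of t))
  have hρ_of : ρ (FreeGroup.of i) = base := by simp [ρ]
  have hρ_right : RegularWreathProduct.rightHom.comp ρ = f := by
    refine FreeGroup.ext_hom _ _ fun t => ?_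
    by_cases ht : t = i
    · simp [ht, hρ_of, base, hf]
    · simp [ρ, ht]
  have hg_right : (ρ g).right = f g := DFunLike.congr_fun hρ_right g
  have hcomm : ρ g * base = base * ρ g := by
    simpa only [hρ_of] using (hg.map ρ).eq
  have hleft := congrFun (congrArg RegularWreathProduct.left hcomm) (f g)
  by_contra hne
  simp [base, hg_right, hne] at hleft

theorem map_eq_map_of_conj_of_eq {Q : Type*} [Group Q] (f : FreeGroup α →* Q) {i : α}
    (hf : f (FreeGroup.of i) = 1) {c d : FreeGroup α}
    (h : c * FreeGroup.of i * c⁻¹ = d * FreeGroup.of i * d⁻¹) : f c = f d := by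
  have hcomm : Commute (d⁻¹ * c) (FreeGroup.of i) := by
    rw [commute_iff_eq, ← mul_inv_eq_iff_eq_mul]
    simpa [mul_assoc] using congrArg (d⁻¹ * · * d) h
  have hf_eq := map_eq_one_of_commute_of f hf hcomm
  rw [map_mul, map_inv, inv_mul_eq_one] at hf_eq
  exact hf_eq.symm

theorem freeGroup_mulAut_ext {φ ψ : MulAut (FreeGroup α)}
    (h : ∀ i, φ (FreeGroup.of i) = ψ (FreeGroup.of i)) : φ = ψ :=
  MulEquiv.toMonoidHom_injective (FreeGroup.ext_hom _ _ h)

variable (α) in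
/-- The group `PΣ_α` of pure symmetric automorphisms: those sending each basis element of the free
group to a conjugate of itself. -/
def pureSymmetric : Subgroup (MulAut (FreeGroup α)) where
  carrier := {φ | ∀ i, IsConj (FreeGroup.of i) (φ (FreeGroup.of i))}
  one_mem' _ := IsConj.refl _
  mul_mem' {φ _} hφ hψ i := (hφ i).trans (φ.toMonoidHom.map_isConj (hψ i))
  inv_mem' {φ} hφ i := by simpa using ((φ⁻¹).toMonoidHom.map_isConj (hφ i)).symm

theorem conj_mem_pureSymmetric (g : FreeGroup α) : MulAut.conj g ∈ pureSymmetric α :=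
  fun _ => isConj_iff.2 ⟨g, rfl⟩

theorem map_apply_of_mem_pureSymmetric {A : Type*} [CommGroup A] (f : FreeGroup α →* A)
    {φ : MulAut (FreeGroup α)} (hφ : φ ∈ pureSymmetric α) (g : FreeGroup α) : f (φ g) = f g := by
  have hcomp : f.comp φ.toMonoidHom = f :=
    FreeGroup.ext_hom _ _ fun i => (isConj_iff_eq.1 (f.map_isConj (hφ i))).symm
  exact DFunLike.congr_fun hcomp g

variable [DecidableEq α]

/-- The exponent sum of the letter `x_j` in a word. -/
def exponentSum (j : α) : FreeGroup α →* Multiplicative ℤ :=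
  FreeGroup.lift (Pi.mulSingle j (Multiplicative.ofAdd 1))

theorem exponentSum_of_self (j : α) :
    exponentSum j (FreeGroup.of j) = Multiplicative.ofAdd 1 := by
  simp [exponentSum]

theorem exponentSum_of_ne {i j : α} (h : i ≠ j) : exponentSum j (FreeGroup.of i) = 1 := by
  simp [exponentSum, h]

/-- The character of `PΣ_α` recording the exponent sum of `x_j` in any `c` with
`φ x_i = c * x_i * c⁻¹`. Such a `c` is unique up to the centralizer of `x_i`, on which that exponent
sum vanishes. -/
noncomputable def conjExponent {i j : α} (hij : i ≠ j) : pureSymmetric α →* Multiplicative ℤ :=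
  MonoidHom.mk' (fun φ => exponentSum j (isConj_iff.1 (φ.2 i)).choose) fun φ ψ => by
    have hφ := (isConj_iff.1 (φ.2 i)).choose_spec
    have hψ := (isConj_iff.1 (ψ.2 i)).choose_spec
    have hφψ := (isConj_iff.1 ((φ * ψ).2 i)).choose_spec
    set c := (isConj_iff.1 (φ.2 i)).choose
    set d := (isConj_iff.1 (ψ.2 i)).choose
    rw [← map_apply_of_mem_pureSymmetric (exponentSum j) φ.2 d, mul_comm, ← map_mul]
    refine map_eq_map_of_conj_of_eq _ (exponentSum_of_ne hij) (hφψ.trans ?_)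
    simp [← hψ, ← hφ, mul_assoc]

theorem conjExponent_eq {i j : α} (hij : i ≠ j) {φ : pureSymmetric α} {c : FreeGroup α}
    (h : φ.1 (FreeGroup.of i) = c * FreeGroup.of i * c⁻¹) :
    conjExponent hij φ = exponentSum j c :=
  map_eq_map_of_conj_of_eq _ (exponentSum_of_ne hij)
    ((isConj_iff.1 (φ.2 i)).choose_spec.trans h)

theorem conjExponent_conj {i j : α} (hij : i ≠ j) (g : FreeGroup α) :
    conjExponent hij ⟨MulAut.conj g, conj_mem_pureSymmetric g⟩ = exponentSum j g :=
  conjExponent_eq hij rfl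

end FreeGroupAutomorphisms

section Whitehead

variable {n : ℕ} {I J : Set (Fin n)} {i j l : Fin n}

theorem whitehead_of_mem (h : i ∈ I) :
    whitehead n I j (FreeGroup.of i) = (FreeGroup.of j)⁻¹ * FreeGroup.of i * FreeGroup.of j := by
  simp [whitehead, h]

theorem whitehead_of_notMem (h : i ∉ I) :
    whitehead n I j (FreeGroup.of i) = FreeGroup.of i := by
  simp [whitehead, h]

theorem whitehead_mem_pureSymmetric (I : Set (Fin n)) (j : Fin n) :
    whitehead n I j ∈ pureSymmetric (Fin n) := by
  intro i
  by_cases h : i ∈ I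
  · exact isConj_iff.2 ⟨(FreeGroup.of j)⁻¹, by simp [whitehead_of_mem h]⟩
  · rw [whitehead_of_notMem h]

theorem conjExponent_whitehead_of_mem (hij : i ≠ j) (hi : i ∈ I) :
    conjExponent hij ⟨whitehead n I j, whitehead_mem_pureSymmetric I j⟩ =
      (Multiplicative.ofAdd 1)⁻¹ := by
  rw [conjExponent_eq hij (c := (FreeGroup.of j)⁻¹) (by simp [whitehead_of_mem hi]), map_inv,
    exponentSum_of_self]

theorem conjExponent_whitehead_of_notMem (hij : i ≠ j) (hi : i ∉ I) :
    conjExponent hij ⟨whitehead n I l, whitehead_mem_pureSymmetric I l⟩ = 1 := by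
  rw [conjExponent_eq hij (c := 1) (by simp [whitehead_of_notMem hi]), map_one]

theorem conjExponent_whitehead_of_ne (hij : i ≠ j) (hlj : l ≠ j) :
    conjExponent hij ⟨whitehead n I l, whitehead_mem_pureSymmetric I l⟩ = 1 := by
  by_cases hi : i ∈ I
  · rw [conjExponent_eq hij (c := (FreeGroup.of l)⁻¹) (by simp [whitehead_of_mem hi]), map_inv,
      exponentSum_of_ne hlj, inv_one]
  · exact conjExponent_whitehead_of_notMem hij hi

theorem whitehead_empty (j : Fin n) : whitehead n ∅ j = 1 :=
  freeGroup_mulAut_ext fun _ => whitehead_of_notMem (Set.notMem_empty _)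

theorem whitehead_union (hI : j ∉ I) (hd : Disjoint I J) :
    whitehead n (I ∪ J) j = whitehead n I j * whitehead n J j := by
  refine freeGroup_mulAut_ext fun i => ?_
  rw [MulAut.mul_apply]
  by_cases hi : i ∈ I
  · rw [whitehead_of_mem (Or.inl hi), whitehead_of_notMem (Set.disjoint_left.1 hd hi),
      whitehead_of_mem hi]
  · by_cases hi' : i ∈ J
    · simp [whitehead_of_mem hi', whitehead_of_notMem hI, whitehead_of_notMem hi,
        whitehead_of_mem (Set.mem_union_right I hi')]
    · rw [whitehead_of_notMem (by simp [hi, hi']), whitehead_of_notMem hi',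
        whitehead_of_notMem hi]

theorem whitehead_biUnion_mem {ι : Type*} {K : Subgroup (MulAut (FreeGroup (Fin n)))}
    {s : Finset ι} {B : ι → Set (Fin n)} (hd : (s : Set ι).PairwiseDisjoint B)
    (hj : ∀ w ∈ s, j ∉ B w) (hK : ∀ w ∈ s, whitehead n (B w) j ∈ K) :
    whitehead n (⋃ w ∈ s, B w) j ∈ K := by
  classical
  induction s using Finset.induction_on with
  | empty => simp [whitehead_empty, K.one_mem]
  | insert w s hw ih =>
    rw [Finset.coe_insert, Set.pairwiseDisjoint_insert_of_notMem (Finset.mem_coe.not.2 hw)] at hd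
    rw [Finset.forall_mem_insert] at hj hK
    rw [Finset.set_biUnion_insert, whitehead_union hj.1 (by simpa using hd.2)]
    exact K.mul_mem hK.1 (ih hd.1 hj.2 hK.2)

theorem whitehead_compl_singleton (j : Fin n) :
    whitehead n {j}ᶜ j = MulAut.conj (FreeGroup.of j)⁻¹ := by
  refine freeGroup_mulAut_ext fun i => ?_
  by_cases h : i = j
  · simp [h, whitehead_of_notMem]
  · simp [whitehead_of_mem, h]

theorem commute_whitehead_of_disjoint (hl : l ∉ I) (hj : j ∉ J) (hd : Disjoint I J) :
    Commute (whitehead n I j) (whitehead n J l) := by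
  refine freeGroup_mulAut_ext fun i => ?_
  rw [MulAut.mul_apply, MulAut.mul_apply]
  by_cases hi : i ∈ I
  · simp [whitehead_of_mem hi, whitehead_of_notMem (Set.disjoint_left.1 hd hi),
      whitehead_of_notMem hj]
  · by_cases hi' : i ∈ J
    · simp [whitehead_of_mem hi', whitehead_of_notMem hi, whitehead_of_notMem hl]
    · simp [whitehead_of_notMem hi', whitehead_of_notMem hi]

theorem commute_whitehead_of_subset (hl : l ∉ I) (hj : j ∈ J) (hIJ : I ⊆ J) :
    Commute (whitehead n I j) (whitehead n J l) := by
  refine freeGroup_mulAut_ext fun i => ?_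
  rw [MulAut.mul_apply, MulAut.mul_apply]
  by_cases hi : i ∈ I
  · simp [whitehead_of_mem hi, whitehead_of_mem (hIJ hi), whitehead_of_mem hj,
      whitehead_of_notMem hl, mul_assoc]
  · by_cases hi' : i ∈ J
    · simp [whitehead_of_mem hi', whitehead_of_notMem hi, whitehead_of_notMem hl]
    · simp [whitehead_of_notMem hi', whitehead_of_notMem hi]

end Whitehead

section SplitExtension

variable {G : Type*} [Group G]

theorem normal_range_mulAut_conj : (MulAut.conj : G →* MulAut G).range.Normal where
  conj_mem := by
    rintro _ ⟨g, rfl⟩ φ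
    exact ⟨φ g, by ext; simp⟩

theorem ker_eq_of_rightInverse {Q : Type*} [Group Q] {N : Subgroup G} [N.Normal] {f : G →* Q}
    {s : Q →* G} (hfs : Function.RightInverse s f) (hN : N ≤ f.ker) (hgen : N ⊔ s.range = ⊤) :
    f.ker = N := by
  refine le_antisymm (fun g hg => ?_) hN
  obtain ⟨y, hy, _, ⟨q, rfl⟩, rfl⟩ :=
    Subgroup.mem_sup_of_normal_left.1 (hgen.symm ▸ Subgroup.mem_top g)
  have hq : q = 1 := by
    rwa [MonoidHom.mem_ker, map_mul, MonoidHom.mem_ker.1 (hN hy), one_mul, hfs q] at hg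
  simpa [hq] using hy

variable {ι : Type*} [Finite ι] [DecidableEq ι]

theorem exists_monoidHom_mulSingle_eq {β : ι → G} (hβ : ∀ i j, Commute (β i) (β j)) :
    ∃ s : (ι → Multiplicative ℤ) →* G,
      ∀ i, s (Pi.mulSingle i (Multiplicative.ofAdd 1)) = β i := by
  cases nonempty_fintype ι
  refine ⟨MonoidHom.noncommPiCoprod (fun i => zpowersHom G (β i))
    fun i j _ x y => (hβ i j).zpow_zpow _ _, fun i => ?_⟩
  exact (MonoidHom.noncommPiCoprod_mulSingle (fun i => zpowersHom G (β i)) i _).trans (by simp)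

theorem surjective_and_ker_eq_of_map_eq_mulSingle {N : Subgroup G} [N.Normal] {β : ι → G}
    (hβ : ∀ i j, Commute (β i) (β j)) (hgen : N ⊔ Subgroup.closure (Set.range β) = ⊤)
    {f : G →* (ι → Multiplicative ℤ)} (hN : N ≤ f.ker)
    (hf : ∀ i, f (β i) = Pi.mulSingle i (Multiplicative.ofAdd 1)) :
    Function.Surjective f ∧ f.ker = N := by
  obtain ⟨s, hs⟩ := exists_monoidHom_mulSingle_eq hβ
  have hfs : f.comp s = MonoidHom.id _ :=
    MonoidHom.functions_ext' _ _ _ fun i => MonoidHom.ext_mint (by simp [hs, hf])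
  have hinv : Function.RightInverse s f := DFunLike.congr_fun hfs
  have hrange : Subgroup.closure (Set.range β) ≤ s.range := by
    rw [Subgroup.closure_le]
    rintro _ ⟨i, rfl⟩
    exact ⟨_, hs i⟩
  exact ⟨hinv.surjective,
    ker_eq_of_rightInverse hinv hN (top_le_iff.1 (hgen ▸ sup_le_sup_left hrange N))⟩

theorem subgroupOf_sup_closure_range_eq_top {ι : Type*} {N H : Subgroup G} {β : ι → H}
    (hH : H = N ⊔ Subgroup.closure (Set.range fun i => (β i : G))) :
    N.subgroupOf H ⊔ Subgroup.closure (Set.range β) = ⊤ := by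
  have hN : N ≤ H := hH ▸ le_sup_left
  apply Subgroup.map_injective H.subtype_injective
  rw [Subgroup.map_sup, Subgroup.map_subgroupOf_eq_of_le hN, MonoidHom.map_closure,
    ← Set.range_comp, ← MonoidHom.range_eq_map, H.range_subtype]
  exact hH.symm

end SplitExtension

section VertexDeletion

variable {V : Type*} {G : SimpleGraph V} {a b c u v r p q : V}

theorem reachable_deleteIncidenceSet_of_adj (h : G.Adj u v) (hu : u ≠ a) (hv : v ≠ a) :
    (G.deleteIncidenceSet a).Reachable u v :=
  (SimpleGraph.deleteIncidenceSet_adj.2 ⟨h, hu, hv⟩).reachable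

theorem reachable_deleteIncidenceSet_iff (hu : u ≠ a) :
    (G.deleteIncidenceSet a).Reachable u v ↔ ∃ p : G.Walk u v, a ∉ p.support := by
  constructor
  · rintro ⟨p⟩
    refine ⟨p.mapLe (G.deleteIncidenceSet_le a), ?_⟩
    rw [SimpleGraph.Walk.support_mapLe_eq_support]
    induction p with
    | nil => simpa using hu.symm
    | cons h _ ih =>
      simpa [hu.symm] using ih (SimpleGraph.deleteIncidenceSet_adj.1 h).2.2
  · rintro ⟨p, hp⟩
    refine ⟨p.transfer _ fun e he => ?_⟩
    rw [SimpleGraph.edgeSet_deleteIncidenceSet]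
    exact ⟨p.edges_subset_edgeSet he, fun ha => hp (p.mem_support_of_mem_edges he ha.2)⟩

theorem reachable_deleteIncidenceSet_or (hG : G.Connected) (hab : a ≠ b) (c : V) :
    (G.deleteIncidenceSet a).Reachable c b ∨ (G.deleteIncidenceSet b).Reachable c a := by
  classical
  by_cases hca : c = a
  · exact Or.inr (hca ▸ SimpleGraph.Reachable.refl _)
  by_cases hcb : c = b
  · exact Or.inl (hcb ▸ SimpleGraph.Reachable.refl _)
  obtain ⟨p, hp⟩ := hG.exists_isPath c a
  by_cases hb : b ∈ p.support
  · exact Or.inl ((reachable_deleteIncidenceSet_iff hca).2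
      ⟨p.takeUntil b hb, p.endpoint_notMem_support_takeUntil hp hb hab⟩)
  · exact Or.inr ((reachable_deleteIncidenceSet_iff hcb).2 ⟨p, hb⟩)

theorem exists_adj_reachable_deleteIncidenceSet (hG : G.Connected) (hua : u ≠ a) :
    ∃ v, G.Adj v a ∧ (G.deleteIncidenceSet a).Reachable u v := by
  obtain ⟨p, hp⟩ := hG.exists_isPath a u
  cases p with
  | nil => exact absurd rfl hua
  | cons h p =>
    rw [SimpleGraph.Walk.cons_isPath_iff] at hp
    exact ⟨_, h.symm, (reachable_deleteIncidenceSet_iff hua).2 ⟨p.reverse, by simpa using hp.2⟩⟩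

theorem not_reachable_deleteIncidenceSet_of_mem_support (hG : G.IsAcyclic) {p : G.Walk u v}
    (hp : p.IsPath) (ha : a ∈ p.support) (hu : u ≠ a) :
    ¬ (G.deleteIncidenceSet a).Reachable u v := by
  classical
  rw [reachable_deleteIncidenceSet_iff hu]
  rintro ⟨q, hq⟩
  have hpq : p = q.bypass := congrArg Subtype.val ((hG.subsingleton_path u v).elim ⟨p, hp⟩ q.toPath)
  exact hq (q.support_bypass_subset_support (hpq ▸ ha))

theorem eq_of_adj_of_reachable_deleteIncidenceSet (hG : G.IsAcyclic) (hu : G.Adj u a)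
    (hv : G.Adj v a) (huv : (G.deleteIncidenceSet a).Reachable u v) : u = v := by
  by_contra hne
  refine not_reachable_deleteIncidenceSet_of_mem_support hG (p := .cons hu (.cons hv.symm .nil))
    ?_ (by simp) hu.ne huv
  simp [SimpleGraph.Walk.isPath_def, hne, hu.ne, hv.ne']

/-- `p` is the neighbour of `u` through which the paths from `u` to the root `r` leave `u`. In place
of paths, this asks that deleting `p` separates `u` from `r`; deleted vertices remain as isolated
ones, so that `p = r` is allowed. -/
def IsParent (G : SimpleGraph V) (r u p : V) : Prop :=
  G.Adj u p ∧ ¬ (G.deleteIncidenceSet p).Reachable u r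

theorem exists_isParent (hG : G.IsTree) (hur : u ≠ r) : ∃ p, IsParent G r u p := by
  obtain ⟨p, hp⟩ := hG.connected.exists_isPath u r
  cases p with
  | nil => exact absurd rfl hur
  | cons h p =>
    exact ⟨_, h, not_reachable_deleteIncidenceSet_of_mem_support hG.isAcyclic hp (by simp) h.ne⟩

theorem IsParent.unique (hG : G.Connected) (hp : IsParent G r u p) (hq : IsParent G r u q) :
    p = q := by
  by_contra hne
  rcases reachable_deleteIncidenceSet_or hG hne r with h | h
  · exact hp.2 ((reachable_deleteIncidenceSet_of_adj hq.1 hp.1.ne (Ne.symm hne)).trans h.symm)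
  · exact hq.2 ((reachable_deleteIncidenceSet_of_adj hp.1 hq.1.ne hne).trans h.symm)

end VertexDeletion

section ComponentLabels

variable {α β : Type*} {T : SimpleGraph (α ⊕ β)} {i j l : α} {w : β} {r u v : α ⊕ β}

/-- The labels other than `j` in the component of `v` in `T - j`. As `v` runs over the neighbours of
`j` in a tree, these are the blocks of the partition `P(T,j)`. -/
def componentLabels (T : SimpleGraph (α ⊕ β)) (j : α) (v : α ⊕ β) : Set α :=
  {i | i ≠ j ∧ (T.deleteIncidenceSet (Sum.inl j)).Reachable (Sum.inl i) v}

theorem self_notMem_componentLabels : j ∉ componentLabels T j v :=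
  fun h => h.1 rfl

theorem componentLabels_eq_of_reachable
    (h : (T.deleteIncidenceSet (Sum.inl j)).Reachable u v) :
    componentLabels T j u = componentLabels T j v :=
  Set.ext fun _ => and_congr_right fun _ => ⟨fun hi => hi.trans h, fun hi => hi.trans h.symm⟩

theorem disjoint_componentLabels_of_not_reachable
    (h : ¬ (T.deleteIncidenceSet (Sum.inl j)).Reachable u v) :
    Disjoint (componentLabels T j u) (componentLabels T j v) :=
  Set.disjoint_left.2 fun _ hu hv => h (hu.2.symm.trans hv.2)

theorem reachable_deleteIncidenceSet_inl_of_mem_componentLabels (hT : T.Connected) (hjl : j ≠ l)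
    (hl : l ∉ componentLabels T j u) (hi : i ∈ componentLabels T j u) :
    (T.deleteIncidenceSet (Sum.inl l)).Reachable (Sum.inl i) (Sum.inl j) :=
  (reachable_deleteIncidenceSet_or hT (Sum.inl_injective.ne hjl) (Sum.inl i)).resolve_left
    fun h => hl ⟨hjl.symm, h.symm.trans hi.2⟩

theorem disjoint_componentLabels (hT : T.Connected) (hjl : j ≠ l)
    (hl : l ∉ componentLabels T j u) (hj : j ∉ componentLabels T l v) :
    Disjoint (componentLabels T j u) (componentLabels T l v) :=
  Set.disjoint_left.2 fun _ hu hv => hj ⟨hjl,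
    (reachable_deleteIncidenceSet_inl_of_mem_componentLabels hT hjl hl hu).symm.trans hv.2⟩

theorem componentLabels_subset (hT : T.Connected) (hl : l ∉ componentLabels T j u)
    (hj : j ∈ componentLabels T l v) : componentLabels T j u ⊆ componentLabels T l v :=
  fun _ hi => ⟨ne_of_mem_of_not_mem hi hl,
    (reachable_deleteIncidenceSet_inl_of_mem_componentLabels hT hj.1 hl hi).trans hj.2⟩

theorem notMem_or_notMem_componentLabels (hT : T.Connected)
    (hu : ¬ (T.deleteIncidenceSet (Sum.inl j)).Reachable u r)
    (hv : ¬ (T.deleteIncidenceSet (Sum.inl l)).Reachable v r) :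
    l ∉ componentLabels T j u ∨ j ∉ componentLabels T l v := by
  by_contra! ⟨hl, hj⟩
  rcases reachable_deleteIncidenceSet_or hT (Sum.inl_injective.ne hj.1) r with h | h
  · exact hu (h.trans hl.2).symm
  · exact hv (h.trans hj.2).symm

theorem exists_adj_inl_ne (hbipR : ∀ w w' : β, ¬ T.Adj (Sum.inr w) (Sum.inr w'))
    (hw : 2 ≤ (T.neighborSet (Sum.inr w)).ncard) (j : α) :
    ∃ i ≠ j, T.Adj (Sum.inr w) (Sum.inl i) := by
  obtain ⟨i | w', hadj, hne⟩ := Set.exists_ne_of_one_lt_ncard hw (Sum.inl j)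
  · exact ⟨i, ne_of_apply_ne Sum.inl hne, hadj⟩
  · exact absurd hadj (hbipR w w')

theorem componentLabels_inr_nonempty (hbipR : ∀ w w' : β, ¬ T.Adj (Sum.inr w) (Sum.inr w'))
    (hw : 2 ≤ (T.neighborSet (Sum.inr w)).ncard) (j : α) :
    (componentLabels T j (Sum.inr w)).Nonempty := by
  obtain ⟨i, hij, hadj⟩ := exists_adj_inl_ne hbipR hw j
  exact ⟨i, hij, reachable_deleteIncidenceSet_of_adj hadj.symm (Sum.inl_injective.ne hij)
    Sum.inr_ne_inl⟩

theorem exists_adj_mem_componentLabels (hT : T.Connected)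
    (hbipL : ∀ i i' : α, ¬ T.Adj (Sum.inl i) (Sum.inl i')) (hij : i ≠ j) :
    ∃ w, T.Adj (Sum.inr w) (Sum.inl j) ∧ i ∈ componentLabels T j (Sum.inr w) := by
  obtain ⟨i' | w, hadj, hreach⟩ :=
    exists_adj_reachable_deleteIncidenceSet hT (Sum.inl_injective.ne hij)
  · exact absurd hadj (hbipL i' j)
  · exact ⟨w, hadj, hij, hreach⟩

theorem exists_isParent_inl (hT : T.IsTree)
    (hbipR : ∀ w w' : β, ¬ T.Adj (Sum.inr w) (Sum.inr w')) {w₀ : β} (hw : w ≠ w₀) :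
    ∃ j, IsParent T (Sum.inr w₀) (Sum.inr w) (Sum.inl j) := by
  obtain ⟨j | w', hparent⟩ := exists_isParent hT (Sum.inr_injective.ne hw)
  · exact ⟨j, hparent⟩
  · exact absurd hparent.1 (hbipR w w')

end ComponentLabels

section TreeSubgroup

variable {n k : ℕ} {T : SimpleGraph (Fin n ⊕ Fin k)} {I : Set (Fin n)} {j l : Fin n}

theorem deleteLabeled_eq_deleteIncidenceSet (T : SimpleGraph (Fin n ⊕ Fin k)) (j : Fin n) :
    deleteLabeled T j = T.deleteIncidenceSet (Sum.inl j) := by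
  ext u v
  rw [deleteLabeled, SimpleGraph.fromRel_adj, SimpleGraph.deleteIncidenceSet_adj, T.adj_comm v u]
  have hne : T.Adj u v → u ≠ v := SimpleGraph.Adj.ne
  tauto

theorem isBlock_iff_exists_componentLabels :
    IsBlock T j I ↔ ∃ i ≠ j, I = componentLabels T j (Sum.inl i) := by
  simp only [IsBlock, deleteLabeled_eq_deleteIncidenceSet, componentLabels]

theorem isBlock_iff_exists_adj (hT : T.Connected)
    (hbipL : ∀ i i' : Fin n, ¬ T.Adj (Sum.inl i) (Sum.inl i'))
    (hbipR : ∀ w w' : Fin k, ¬ T.Adj (Sum.inr w) (Sum.inr w'))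
    (hdeg : ∀ w : Fin k, 2 ≤ (T.neighborSet (Sum.inr w)).ncard) :
    IsBlock T j I ↔ ∃ w, T.Adj (Sum.inr w) (Sum.inl j) ∧ I = componentLabels T j (Sum.inr w) := by
  rw [isBlock_iff_exists_componentLabels]
  constructor
  · rintro ⟨i, hij, rfl⟩
    obtain ⟨w, hadj, hi⟩ := exists_adj_mem_componentLabels hT hbipL hij
    exact ⟨w, hadj, componentLabels_eq_of_reachable hi.2⟩
  · rintro ⟨w, -, rfl⟩
    obtain ⟨i, hi⟩ := componentLabels_inr_nonempty hbipR (hdeg w) j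
    exact ⟨i, hi.1, (componentLabels_eq_of_reachable hi.2).symm⟩

/-- The Whitehead generator `α_{I,j}` whose set `I` consists of the labels other than `j` in the
component of the unlabeled vertex `w` in `T - j`. -/
noncomputable def branchWhitehead (T : SimpleGraph (Fin n ⊕ Fin k)) (j : Fin n) (w : Fin k) :
    MulAut (FreeGroup (Fin n)) :=
  whitehead n (componentLabels T j (Sum.inr w)) j

theorem commute_branchWhitehead (hT : T.Connected) {r : Fin n ⊕ Fin k} {v w : Fin k}
    (hv : ¬ (T.deleteIncidenceSet (Sum.inl j)).Reachable (Sum.inr v) r)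
    (hw : ¬ (T.deleteIncidenceSet (Sum.inl l)).Reachable (Sum.inr w) r) :
    Commute (branchWhitehead T j v) (branchWhitehead T l w) := by
  by_cases hjl : j = l
  · subst hjl
    by_cases hvw : (T.deleteIncidenceSet (Sum.inl j)).Reachable (Sum.inr v) (Sum.inr w)
    · rw [branchWhitehead, branchWhitehead, componentLabels_eq_of_reachable hvw]
    · exact commute_whitehead_of_disjoint self_notMem_componentLabels self_notMem_componentLabels
        (disjoint_componentLabels_of_not_reachable hvw)
  by_cases hl : l ∈ componentLabels T j (Sum.inr v)
  · have hj := (notMem_or_notMem_componentLabels hT hv hw).resolve_left (not_not_intro hl)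
    exact (commute_whitehead_of_subset hj hl (componentLabels_subset hT hj hl)).symm
  by_cases hj : j ∈ componentLabels T l (Sum.inr w)
  · exact commute_whitehead_of_subset hl hj (componentLabels_subset hT hl hj)
  · exact commute_whitehead_of_disjoint hl hj (disjoint_componentLabels hT hjl hl hj)

/-- The subgroup `H` of `Aut(F_n)` generated by the inner automorphisms and the Whitehead generators
carried by `T`. -/
def treeSubgroup (T : SimpleGraph (Fin n ⊕ Fin k)) : Subgroup (MulAut (FreeGroup (Fin n))) :=
  Subgroup.closure
    (Set.range (MulAut.conj : FreeGroup (Fin n) →* MulAut (FreeGroup (Fin n)))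
      ∪ {φ | ∃ (j : Fin n) (I : Set (Fin n)), IsBlock T j I ∧ φ = whitehead n I j})

theorem treeSubgroup_le_pureSymmetric (T : SimpleGraph (Fin n ⊕ Fin k)) :
    treeSubgroup T ≤ pureSymmetric (Fin n) := by
  rw [treeSubgroup, Subgroup.closure_le]
  rintro _ (⟨g, rfl⟩ | ⟨j, I, -, rfl⟩)
  · exact conj_mem_pureSymmetric g
  · exact whitehead_mem_pureSymmetric I j

variable {w₀ : Fin k} {p : {w // w ≠ w₀} → Fin n}

theorem reachable_root_or_parent_eq (hT : T.Connected)
    (hp : ∀ w, IsParent T (Sum.inr w₀) (Sum.inr w.1) (Sum.inl (p w))) {w : Fin k}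
    (hadj : T.Adj (Sum.inr w) (Sum.inl j)) :
    (T.deleteIncidenceSet (Sum.inl j)).Reachable (Sum.inr w) (Sum.inr w₀) ∨
      ∃ hw : w ≠ w₀, p ⟨w, hw⟩ = j := by
  refine or_iff_not_imp_left.2 fun hj => ?_
  have hw : w ≠ w₀ := by
    rintro rfl
    exact hj (SimpleGraph.Reachable.refl _)
  exact ⟨hw, Sum.inl_injective (IsParent.unique hT (hp ⟨w, hw⟩) ⟨hadj, hj⟩)⟩

theorem union_biUnion_componentLabels (hT : T.Connected)
    (hbipL : ∀ i i' : Fin n, ¬ T.Adj (Sum.inl i) (Sum.inl i'))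
    (hp : ∀ w, IsParent T (Sum.inr w₀) (Sum.inr w.1) (Sum.inl (p w))) (j : Fin n) :
    componentLabels T j (Sum.inr w₀) ∪
      ⋃ w ∈ Finset.univ.filter (p · = j), componentLabels T j (Sum.inr w.1) = {j}ᶜ := by
  ext i
  simp only [Set.mem_union, Set.mem_iUnion, Finset.mem_filter_univ, exists_prop,
    Set.mem_compl_singleton_iff]
  constructor
  · rintro (hi | ⟨_, -, hi⟩) <;> exact hi.1
  · intro hij
    obtain ⟨w, hadj, hi⟩ := exists_adj_mem_componentLabels hT hbipL hij
    rcases reachable_root_or_parent_eq hT hp hadj with hroot | ⟨hw, hpw⟩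
    · exact Or.inl (componentLabels_eq_of_reachable hroot ▸ hi)
    · exact Or.inr ⟨⟨w, hw⟩, hpw, hi⟩

theorem branchWhitehead_root_mem (hT : T.IsTree)
    (hbipL : ∀ i i' : Fin n, ¬ T.Adj (Sum.inl i) (Sum.inl i'))
    (hp : ∀ w, IsParent T (Sum.inr w₀) (Sum.inr w.1) (Sum.inl (p w))) (j : Fin n) :
    branchWhitehead T j w₀ ∈ MulAut.conj.range ⊔
      Subgroup.closure (Set.range fun w => branchWhitehead T (p w) w.1) := by
  let children := Finset.univ.filter (p · = j)
  have hchild : ∀ w ∈ children, p w = j := fun w hw => (Finset.mem_filter_univ w).1 hw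
  let below := ⋃ w ∈ children, componentLabels T j (Sum.inr w.1)
  have hbelow : whitehead n below j ∈
      Subgroup.closure (Set.range fun w => branchWhitehead T (p w) w.1) := by
    refine whitehead_biUnion_mem (fun v hv w hw hvw => ?_)
      (fun _ _ => self_notMem_componentLabels) fun w hw => ?_
    · exact disjoint_componentLabels_of_not_reachable fun h => hvw <| Subtype.ext <|
        Sum.inr_injective <| eq_of_adj_of_reachable_deleteIncidenceSet hT.isAcyclic
          (hchild v hv ▸ (hp v).1) (hchild w hw ▸ (hp w).1) h
    · exact Subgroup.subset_closure ⟨w, by simp only [branchWhitehead, hchild w hw]⟩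
  have hdisj : Disjoint (componentLabels T j (Sum.inr w₀)) below := by
    simp only [below, Set.disjoint_iUnion_right]
    intro w hw
    exact (disjoint_componentLabels_of_not_reachable (hchild w hw ▸ (hp w).2)).symm
  have hprod : branchWhitehead T j w₀ * whitehead n below j = MulAut.conj (FreeGroup.of j)⁻¹ := by
    rw [branchWhitehead, ← whitehead_union self_notMem_componentLabels hdisj,
      union_biUnion_componentLabels hT.connected hbipL hp, whitehead_compl_singleton]
  rw [eq_mul_inv_of_mul_eq hprod]
  exact Subgroup.mul_mem_sup ⟨_, rfl⟩ (inv_mem hbelow)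

theorem treeSubgroup_eq_sup (hT : T.IsTree)
    (hbipL : ∀ i i' : Fin n, ¬ T.Adj (Sum.inl i) (Sum.inl i'))
    (hbipR : ∀ w w' : Fin k, ¬ T.Adj (Sum.inr w) (Sum.inr w'))
    (hdeg : ∀ w : Fin k, 2 ≤ (T.neighborSet (Sum.inr w)).ncard)
    (hp : ∀ w, IsParent T (Sum.inr w₀) (Sum.inr w.1) (Sum.inl (p w))) :
    treeSubgroup T = MulAut.conj.range ⊔
      Subgroup.closure (Set.range fun w => branchWhitehead T (p w) w.1) := by
  apply le_antisymm
  · rw [treeSubgroup, Subgroup.closure_le]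
    rintro _ (⟨g, rfl⟩ | ⟨j, I, hI, rfl⟩)
    · exact Subgroup.mem_sup_left ⟨g, rfl⟩
    obtain ⟨w, hadj, rfl⟩ := (isBlock_iff_exists_adj hT.connected hbipL hbipR hdeg).1 hI
    rcases reachable_root_or_parent_eq hT.connected hp hadj with hroot | ⟨hw, rfl⟩
    · rw [componentLabels_eq_of_reachable hroot]
      exact branchWhitehead_root_mem hT hbipL hp j
    · exact Subgroup.mem_sup_right (Subgroup.subset_closure ⟨⟨w, hw⟩, rfl⟩)
  · rw [sup_le_iff, Subgroup.closure_le]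
    constructor
    · rintro _ ⟨g, rfl⟩
      exact Subgroup.subset_closure (Or.inl ⟨g, rfl⟩)
    · rintro _ ⟨w, rfl⟩
      exact Subgroup.subset_closure (Or.inr ⟨p w, _,
        (isBlock_iff_exists_adj hT.connected hbipL hbipR hdeg).2 ⟨w, (hp w).1, rfl⟩, rfl⟩)

theorem exists_pureSymmetric_hom_dual_branchWhitehead (hT : T.IsAcyclic)
    (hbipR : ∀ w w' : Fin k, ¬ T.Adj (Sum.inr w) (Sum.inr w'))
    (hdeg : ∀ w : Fin k, 2 ≤ (T.neighborSet (Sum.inr w)).ncard)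
    (hp : ∀ w, IsParent T (Sum.inr w₀) (Sum.inr w.1) (Sum.inl (p w))) :
    ∃ f : pureSymmetric (Fin n) →* ({w // w ≠ w₀} → Multiplicative ℤ),
      (∀ g, f ⟨MulAut.conj g, conj_mem_pureSymmetric g⟩ = 1) ∧
      ∀ w, f ⟨branchWhitehead T (p w) w.1, whitehead_mem_pureSymmetric _ _⟩ =
        Pi.mulSingle w (Multiplicative.ofAdd 1) := by
  choose a ha using fun w : {w // w ≠ w₀} => componentLabels_inr_nonempty hbipR (hdeg w) (p w)
  choose b hb using fun w : {w // w ≠ w₀} => componentLabels_inr_nonempty hbipR (hdeg w₀) (p w)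
  have hb_notMem (v w) (hvw : p v = p w) : b w ∉ componentLabels T (p v) (Sum.inr v.1) :=
    Set.disjoint_right.1 (disjoint_componentLabels_of_not_reachable (hp v).2) (hvw ▸ hb w)
  have ha_notMem (v w) (hvw : p v = p w) (hne : w ≠ v) :
      a w ∉ componentLabels T (p v) (Sum.inr v.1) := by
    refine Set.disjoint_left.1 (disjoint_componentLabels_of_not_reachable fun h => hne ?_)
      (hvw ▸ ha w)
    exact Subtype.ext <| Sum.inr_injective <|
      eq_of_adj_of_reachable_deleteIncidenceSet hT (hvw ▸ (hp w).1) (hp v).1 h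
  refine ⟨MonoidHom.pi fun w => conjExponent (hb w).1 / conjExponent (ha w).1, fun g => ?_,
    fun v => ?_⟩
  · ext w
    simp [conjExponent_conj]
  · funext w
    rw [MonoidHom.pi_apply, MonoidHom.div_apply]
    simp only [branchWhitehead]
    rcases eq_or_ne w v with rfl | hne
    · rw [conjExponent_whitehead_of_mem _ (ha w),
        conjExponent_whitehead_of_notMem _ (hb_notMem w w rfl), Pi.mulSingle_eq_same, one_div,
        inv_inv]
    rw [Pi.mulSingle_eq_of_ne hne]
    by_cases hvw : p v = p w
    · rw [conjExponent_whitehead_of_notMem _ (hb_notMem v w hvw),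
        conjExponent_whitehead_of_notMem _ (ha_notMem v w hvw hne), div_one]
    · rw [conjExponent_whitehead_of_ne _ hvw, conjExponent_whitehead_of_ne _ hvw, div_one]

end TreeSubgroup

/-- Let `n ≥ 2`, `k ≥ 1`, and let `T` be a bipartite labeled tree
with `n` labeled and `k` unlabeled vertices. Let `H ≤ Aut(F_n)` be generated by all
inner automorphisms together with the Whitehead generators `α_{I,j}` for all labeled
`j` and all blocks `I ∈ P(T,j)`. Then there is a surjective homomorphism from `H`
onto `ℤ^(k-1)` whose kernel is exactly the subgroup of inner automorphisms. -/
theorem tree_subgroup_mod_inner_free_abelian (n k : ℕ) (hn : 2 ≤ n) (hk : 1 ≤ k)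
    (T : SimpleGraph (Fin n ⊕ Fin k))
    (htree : T.IsTree)
    (hbipL : ∀ i i' : Fin n, ¬ T.Adj (Sum.inl i) (Sum.inl i'))
    (hbipR : ∀ w w' : Fin k, ¬ T.Adj (Sum.inr w) (Sum.inr w'))
    (hdeg : ∀ w : Fin k, 2 ≤ (T.neighborSet (Sum.inr w)).ncard) :
    ∀ H : Subgroup (MulAut (FreeGroup (Fin n))),
      H = Subgroup.closure
        (Set.range (MulAut.conj : FreeGroup (Fin n) →* MulAut (FreeGroup (Fin n)))
          ∪ {φ | ∃ (j : Fin n) (I : Set (Fin n)), IsBlock T j I ∧ φ = whitehead n I j}) →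
      ∃ f : H →* Multiplicative (Fin (k - 1) → ℤ),
        Function.Surjective f ∧
        ∀ φ : H, f φ = 1 ↔
          (φ : MulAut (FreeGroup (Fin n)))
            ∈ Set.range (MulAut.conj : FreeGroup (Fin n) →* MulAut (FreeGroup (Fin n))) := by
  rintro H (rfl : H = treeSubgroup T)
  let w₀ : Fin k := ⟨0, hk⟩
  choose p hp using fun w : {w // w ≠ w₀} => exists_isParent_inl htree hbipR w.2
  obtain ⟨f, hf_conj, hf_branch⟩ :=
    exists_pureSymmetric_hom_dual_branchWhitehead htree.isAcyclic hbipR hdeg hp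
  have hsup := treeSubgroup_eq_sup htree hbipL hbipR hdeg hp
  let β (w : {w // w ≠ w₀}) : treeSubgroup T := ⟨branchWhitehead T (p w) w.1,
    hsup ▸ Subgroup.mem_sup_right (Subgroup.subset_closure ⟨w, rfl⟩)⟩
  have hβ (v w) : Commute (β v) (β w) :=
    Subtype.ext (commute_branchWhitehead htree.connected (hp v).2 (hp w).2)
  have : (MulAut.conj : FreeGroup (Fin n) →* _).range.Normal := normal_range_mulAut_conj
  let F := f.comp (Subgroup.inclusion (treeSubgroup_le_pureSymmetric T))
  obtain ⟨hsurj, hker⟩ := surjective_and_ker_eq_of_map_eq_mulSingle (f := F) hβ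
    (subgroupOf_sup_closure_range_eq_top hsup)
    (by rintro ⟨_, _⟩ ⟨g, rfl⟩; exact hf_conj g) hf_branch
  let e : {w // w ≠ w₀} ≃ Fin (k - 1) :=
    Fintype.equivFinOfCardEq (by simp [Fintype.card_subtype_compl])
  let E : ({w // w ≠ w₀} → Multiplicative ℤ) ≃* Multiplicative (Fin (k - 1) → ℤ) :=
    (MulEquiv.arrowCongr e (MulEquiv.refl _)).trans (MulEquiv.funMultiplicative _ ℤ).symm
  refine ⟨E.toMonoidHom.comp F, E.surjective.comp hsurj, fun φ => ?_⟩
  exact (map_eq_one_iff E E.injective).trans (SetLike.ext_iff.1 hker φ)
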